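/- arXiv:2603.17772 — 5 statements merged into one kernel-verified Lean document; each statement's English description precedes it below -/
import Mathlib

section
/- Let n ≥ 3 and let f : S₀ⁿ → A be onto and pairwise strategy-proof. Let R̄ ∈ S₀ⁿ be a profile in which every agent has a single-peaked preference, τ(R̄_i) = 0 for all i ∈ {1,…,n−1}, and τ(R̄_n) = 1, and set x = f(R̄). Then for every profile R ∈ S₀ⁿ with R ≠ R^{0N} and x < τ̲(R), f(R) = τ̲(R). -/
/-- The set of alternatives: the closed interval [0,1]. -/
abbrev A : Type := Set.Icc (0:ℝ) 1

def zeroA : A := ⟨0, by constructor <;> norm_num⟩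
def oneA : A := ⟨1, by constructor <;> norm_num⟩

/-- A preference: a complete (total) and transitive binary relation on A. -/
structure Pref : Type where
  rel : A → A → Prop
  total : ∀ a b : A, rel a b ∨ rel b a
  trans : ∀ a b c : A, rel a b → rel b c → rel a c

/-- Strict part of a preference. -/
def Pref.P (R : Pref) (a b : A) : Prop := R.rel a b ∧ ¬ R.rel b a

/-- `p` is a peak of `R`: `R` is single-peaked with peak `p`. -/
def Pref.IsPeak (R : Pref) (p : A) : Prop :=
  ∀ a b : A, ((p ≤ a ∧ a < b) ∨ (b < a ∧ a ≤ p)) → R.P a b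

/-- Single-peaked preferences. -/
def SinglePeaked (R : Pref) : Prop := ∃ p : A, R.IsPeak p

/-- The completely indifferent preference R⁰. -/
def R0 : Pref :=
  ⟨fun _ _ => True, fun _ _ => Or.inl trivial, fun _ _ _ _ _ => trivial⟩

/-- The augmented domain S₀ = S ∪ {R⁰}. -/
def S0 : Type := {R : Pref // SinglePeaked R ∨ R = R0}

/-- The completely indifferent profile R^{0N}. -/
def indiffProfile (n : ℕ) : Fin n → S0 := fun _ => ⟨R0, Or.inr rfl⟩

open Classical in
/-- The peak of a single-peaked preference (junk value `zeroA` otherwise). -/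
noncomputable def peak (R : Pref) : A :=
  if h : SinglePeaked R then h.choose else zeroA

/-- τ̲(R): the smallest peak among non-indifferent agents (as a real number). -/
noncomputable def tmin {n : ℕ} (R : Fin n → S0) : ℝ :=
  sInf {x : ℝ | ∃ i : Fin n, (R i).1 ≠ R0 ∧ ((peak (R i).1 : ℝ) = x)}

/-- τ̄(R): the largest peak among non-indifferent agents (as a real number). -/
noncomputable def tmax {n : ℕ} (R : Fin n → S0) : ℝ :=
  sSup {x : ℝ | ∃ i : Fin n, (R i).1 ≠ R0 ∧ ((peak (R i).1 : ℝ) = x)}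

/-- Onto-ness. -/
def Onto {n : ℕ} (f : (Fin n → S0) → A) : Prop := ∀ a : A, ∃ R : Fin n → S0, f R = a

/-- (Individual) strategy-proofness. -/
def StrategyProof {n : ℕ} (f : (Fin n → S0) → A) : Prop :=
  ∀ (R : Fin n → S0) (i : Fin n) (Ri' : S0),
    (R i).1.rel (f R) (f (Function.update R i Ri'))

/-- No profitable deviation by the coalition `S`. -/
def CoalitionSP {n : ℕ} (f : (Fin n → S0) → A) (S : Finset (Fin n)) : Prop :=
  ¬ ∃ R R' : Fin n → S0,
      (∀ i ∉ S, R' i = R i) ∧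
      (∀ i ∈ S, (R i).1.rel (f R') (f R)) ∧
      (∃ j ∈ S, (R j).1.P (f R') (f R))

/-- Group strategy-proofness. -/
def GroupSP {n : ℕ} (f : (Fin n → S0) → A) : Prop :=
  ∀ S : Finset (Fin n), S.Nonempty → CoalitionSP f S

/-- Pairwise strategy-proofness. -/
def PairwiseSP {n : ℕ} (f : (Fin n → S0) → A) : Prop :=
  ∀ S : Finset (Fin n), S.Nonempty → S.card ≤ 2 → CoalitionSP f S

/-- No deviation making every member of `S` strictly better off. -/
def WeakCoalitionSP {n : ℕ} (f : (Fin n → S0) → A) (S : Finset (Fin n)) : Prop :=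
  ¬ ∃ R R' : Fin n → S0,
      (∀ i ∉ S, R' i = R i) ∧
      (∀ i ∈ S, (R i).1.P (f R') (f R))

/-- Weak group strategy-proofness. -/
def WeakGroupSP {n : ℕ} (f : (Fin n → S0) → A) : Prop :=
  ∀ S : Finset (Fin n), S.Nonempty → WeakCoalitionSP f S

/-- `a` is efficient at the profile `R`. -/
def EfficientAt {n : ℕ} (R : Fin n → S0) (a : A) : Prop :=
  ¬ ∃ b : A, b ≠ a ∧ (∀ i : Fin n, (R i).1.rel b a) ∧ (∃ j : Fin n, (R j).1.P b a)

/-- Efficiency of a social choice function. -/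
def Efficient {n : ℕ} (f : (Fin n → S0) → A) : Prop := ∀ R : Fin n → S0, EfficientAt R (f R)

/-- The tops-only property. -/
def TopsOnly {n : ℕ} (f : (Fin n → S0) → A) : Prop :=
  ∀ R R' : Fin n → S0,
    (∀ i : Fin n, (R i).1 = R0 ↔ (R' i).1 = R0) →
    (∀ i : Fin n, (R i).1 ≠ R0 → peak (R i).1 = peak (R' i).1) →
    f R = f R'

/-- Target rules with a default. -/
def IsTargetRule {n : ℕ} (f : (Fin n → S0) → A) : Prop :=
  ∃ x y : A, f (indiffProfile n) = y ∧
    ∀ R : Fin n → S0, R ≠ indiffProfile n →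
      ((tmin R ≤ (x : ℝ) ∧ (x : ℝ) ≤ tmax R) → f R = x) ∧
      ((x : ℝ) < tmin R → (f R : ℝ) = tmin R) ∧
      (tmax R < (x : ℝ) → (f R : ℝ) = tmax R)

open Classical in
/-- Peak `m`; everything to the left of `m` is preferred to everything to its right. -/
noncomputable def steepU (m t : A) : ℝ := if t ≤ m then (t : ℝ) - m else -2 - (t : ℝ)

noncomputable def steepPref (m : A) : Pref where
  rel a b := steepU m b ≤ steepU m a
  total a b := le_total _ _
  trans a b c h1 h2 := le_trans h2 h1

lemma steep_P (m a b : A) : (steepPref m).P a b ↔ steepU m b < steepU m a := by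
  simp only [Pref.P, steepPref, not_le]
  exact ⟨fun h => h.2, fun h => ⟨h.le, h⟩⟩

lemma steep_left {m a b : A} (hb : b < a) (ha : a ≤ m) : (steepPref m).P a b := by
  rw [steep_P, steepU, steepU, if_pos ha, if_pos (hb.le.trans ha)]
  have : (b : ℝ) < a := hb
  linarith

lemma steep_cross {m a b : A} (ha : a ≤ m) (hb : m < b) : (steepPref m).P a b := by
  rw [steep_P, steepU, steepU, if_pos ha, if_neg (not_le.2 hb)]
  have h1 := a.2.1
  have h2 := m.2.2
  have h3 : (m : ℝ) < b := hb
  have h4 := m.2.1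
  linarith

lemma steep_peak (m : A) : (steepPref m).IsPeak m := by
  rintro a b (⟨h1, h2⟩ | ⟨h1, h2⟩)
  · rcases h1.eq_or_lt with h | h
    · subst h; exact steep_cross le_rfl h2
    · rw [steep_P, steepU, steepU, if_neg (not_le.2 h), if_neg (not_le.2 (h.trans h2))]
      have : (a : ℝ) < b := h2
      linarith
  · exact steep_left h1 h2

noncomputable def steep (m : A) : S0 := ⟨steepPref m, Or.inl ⟨m, steep_peak m⟩⟩

def indS : S0 := ⟨R0, Or.inr rfl⟩

lemma indS_val : indS.1 = R0 := rfl

lemma peak_best {R : Pref} {p a : A} (h : R.IsPeak p) (ha : a ≠ p) : R.P p a := by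
  rcases lt_or_gt_of_ne ha with h1 | h1
  · exact h _ _ (Or.inr ⟨h1, le_rfl⟩)
  · exact h _ _ (Or.inl ⟨le_rfl, h1⟩)

lemma path_const {n : ℕ} (f : (Fin n → S0) → A) (c : A) (Q Q' : Fin n → S0) (h : f Q = c)
    (step : ∀ (W : Fin n → S0) (b : Fin n), (∀ a, W a = Q a ∨ W a = Q' a) → W b = Q b →
      f W = c → f (Function.update W b (Q' b)) = c) : f Q' = c := by
  classical
  have key : ∀ T : Finset (Fin n), f (fun a => if a ∈ T then Q' a else Q a) = c := by
    intro T
    induction T using Finset.induction_on with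
    | empty => simpa using h
    | insert b T hb ih =>
      have := step _ b (fun a => by by_cases ha : a ∈ T <;> simp [ha]) (by simp [hb]) ih
      convert this using 2
      funext a
      by_cases hab : a = b
      · subst hab; simp
      · simp [hab]
  simpa using key Finset.univ

section
variable {n : ℕ} {f : (Fin n → S0) → A}

lemma sp_one (hP : PairwiseSP f) (W : Fin n → S0) (b : Fin n) (r : S0) :
    ¬ (W b).1.P (f (Function.update W b r)) (f W) := by
  intro h
  refine hP {b} (by simp) (by simp) ⟨W, Function.update W b r, ?_, ?_, b, by simp, h⟩
  · intro i hi
    rw [Function.update_of_ne (by simpa using hi)]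
  · intro i hi
    rw [Finset.mem_singleton] at hi
    subst hi; exact h.1

lemma sp_two (hP : PairwiseSP f) (W : Fin n → S0) (b j : Fin n) (r : S0) (hb : (W b).1 = R0) :
    ¬ (W j).1.P (f (Function.update W b r)) (f W) := by
  classical
  intro h
  refine hP {b, j} (by simp) Finset.card_le_two
    ⟨W, Function.update W b r, ?_, ?_, j, by simp, h⟩
  · intro i hi
    rw [Function.update_of_ne (by rintro rfl; simp at hi)]
  · intro i hi
    rw [Finset.mem_insert, Finset.mem_singleton] at hi
    rcases hi with hi | hi
    · subst hi; rw [hb]; trivial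
    · subst hi; exact h.1

lemma unanimity (hO : Onto f) (hP : PairwiseSP f) (Q : Fin n → S0) (m : A) (i : Fin n)
    (hi : (Q i).1.IsPeak m) (hQ : ∀ a, (Q a).1 = R0 ∨ (Q a).1.IsPeak m) : f Q = m := by
  have move : ∀ (W : Fin n → S0) (b : Fin n), f W = m → (Q b).1.IsPeak m →
      f (Function.update W b (Q b)) = m := by
    intro W b hW hb
    by_contra hne
    have := sp_one hP (Function.update W b (Q b)) b (W b)
    simp only [Function.update_idem, Function.update_eq_self, Function.update_self, hW] at this
    exact this (peak_best hb hne)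
  obtain ⟨S, hS⟩ := hO m
  refine path_const f m (Function.update S i (Q i)) Q (move S i hS hi) ?_
  intro W b hW _ hf
  rcases hQ b with hb | hb
  · by_cases hbi : b = i
    · subst hbi; exact move W b hf hi
    have hWi : W i = Q i := by
      rcases hW i with h | h
      · simpa using h
      · exact h
    by_contra hne
    have := sp_two hP (Function.update W b (Q b)) b i (W b) (by simpa using hb)
    rw [Function.update_idem, Function.update_eq_self, Function.update_of_ne (Ne.symm hbi),
      hWi, hf] at this
    exact this (peak_best hi hne)
  · exact move W b hf hb

lemma lower_eff (hO : Onto f) (hP : PairwiseSP f) (Q : Fin n → S0) (m : A) (i : Fin n)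
    (hi : (Q i).1 ≠ R0) (hQ : ∀ a, (Q a).1 = R0 ∨ ∃ p, m ≤ p ∧ (Q a).1.IsPeak p) :
    m ≤ f Q := by
  classical
  by_contra hlt
  rw [not_le] at hlt
  let Q' : Fin n → S0 := fun b => if (Q b).1 = R0 then Q b else steep m
  have h1 : f Q' = m := by
    refine unanimity hO hP Q' m i ?_ ?_
    · simp only [Q', if_neg hi]; exact steep_peak m
    · intro a
      by_cases ha : (Q a).1 = R0
      · left; simp only [Q', if_pos ha]; exact ha
      · right; simp only [Q', if_neg ha]; exact steep_peak m
  have h2 : f Q' = f Q := by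
    refine path_const f (f Q) Q Q' rfl ?_
    intro W b _ hb hf
    by_cases hb0 : (Q b).1 = R0
    · simp only [Q', if_pos hb0, ← hb, Function.update_eq_self, hf]
    · simp only [Q', if_neg hb0]
      obtain ⟨p, hmp, hp⟩ := (hQ b).resolve_left hb0
      have s1 := sp_one hP W b (steep m)
      have s2 := sp_one hP (Function.update W b (steep m)) b (W b)
      rw [Function.update_idem, Function.update_eq_self, Function.update_self, hf] at s2
      rw [hb, hf] at s1
      by_contra hne
      rcases lt_or_gt_of_ne hne with h | h
      · exact s2 (steep_left h hlt.le)
      · rcases le_or_gt (f (Function.update W b (steep m))) m with h' | h'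
        · exact s1 (hp _ _ (Or.inr ⟨h, h'.trans hmp⟩))
        · exact s2 (steep_cross hlt.le h')
  rw [h1] at h2
  exact absurd h2 hlt.ne'

/-- Outcome does not depend on the others once peaks 0 and 1 are both present. -/
lemma extremes_const (hP : PairwiseSP f) (Q Q' : Fin n → S0) (k j : Fin n)
    (hk : (Q k).1.IsPeak zeroA) (hj : (Q j).1.IsPeak oneA) (ek : Q' k = Q k) (ej : Q' j = Q j) :
    f Q' = f Q := by
  refine path_const f (f Q) Q Q' rfl ?_
  intro W b hW hb hf
  by_cases hbk : b = k
  · subst hbk; rw [ek, ← hb, Function.update_eq_self, hf]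
  by_cases hbj : b = j
  · subst hbj; rw [ej, ← hb, Function.update_eq_self, hf]
  have wk : W k = Q k := (hW k).elim id (fun h => h.trans ek)
  have wj : W j = Q j := (hW j).elim id (fun h => h.trans ej)
  have drop : ∀ r : S0, f (Function.update W b r) =
      f (Function.update W b indS) := by
    intro r
    have t1 := sp_two hP (Function.update W b indS) b k r (by rw [Function.update_self]; rfl)
    have t2 := sp_two hP (Function.update W b indS) b j r (by rw [Function.update_self]; rfl)
    rw [Function.update_idem, Function.update_of_ne (Ne.symm hbk), wk] at t1
    rw [Function.update_idem, Function.update_of_ne (Ne.symm hbj), wj] at t2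
    by_contra hne
    rcases lt_or_gt_of_ne hne with h | h
    · exact t1 (hk _ _ (Or.inl ⟨(f _).2.1, h⟩))
    · exact t2 (hj _ _ (Or.inr ⟨h, (f _).2.2⟩))
  rw [drop, ← drop (W b), Function.update_eq_self, hf]

/-- Core argument. -/
lemma core (hO : Onto f) (hP : PairwiseSP f) (i j k : Fin n) (hij : i ≠ j) (hik : i ≠ k)
    (hjk : j ≠ k) (z o : S0) (ho : o.1.IsPeak oneA) (x m : A) (hxm : x < m)
    (hx : ∀ Q : Fin n → S0, Q k = z → Q j = o → f Q = x)
    (R : Fin n → S0) (hi : (R i).1 ≠ R0) (him : (R i).1.IsPeak m)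
    (hR : ∀ a, (R a).1 = R0 ∨ ∃ p, m ≤ p ∧ (R a).1.IsPeak p) : f R = m := by
  classical
  have hm1 : m ≤ oneA := m.2.2
  let B : S0 → Fin n → S0 := fun s a => if a = i then s else if a = j then o else indS
  have hB : ∀ s : S0, s.1.IsPeak m → ∀ a, (B s a).1 = R0 ∨ ∃ p, m ≤ p ∧ (B s a).1.IsPeak p := by
    intro s hs a
    by_cases ha : a = i
    · right; exact ⟨m, le_rfl, by simpa [B, ha] using hs⟩
    by_cases ha' : a = j
    · right; exact ⟨oneA, hm1, by simpa [B, ha', hij.symm] using ho⟩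
    · left; simp [B, ha, ha', indS_val]
  have steep_ne : (steep m).1 ≠ R0 := by
    intro h
    have h1 := steep_left hxm le_rfl
    change (steep m).1.P m x at h1
    rw [h] at h1
    exact h1.2 trivial
  -- step 2
  have hD : f (B (steep m)) = m := by
    have hge : m ≤ f (B (steep m)) :=
      lower_eff hO hP _ m i (by simpa [B] using steep_ne) (hB _ (steep_peak m))
    by_contra hne
    have hgt := lt_of_le_of_ne hge (Ne.symm hne)
    have t := sp_two hP (B (steep m)) k i z (by simp [B, hik.symm, hjk.symm, indS_val])
    rw [hx _ (by simp) (by simp [hjk, B, hij.symm])] at t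
    have : B (steep m) i = steep m := by simp [B]
    rw [this] at t
    exact t (steep_cross hxm.le hgt)
  -- step 3
  have hE : f (B (R i)) = m := by
    by_contra hne
    have t := sp_one hP (B (R i)) i (steep m)
    have e1 : Function.update (B (R i)) i (steep m) = B (steep m) := by
      funext a
      by_cases ha : a = i
      · subst ha; simp [B]
      · simp [B, ha]
    have e2 : B (R i) i = R i := by simp [B]
    rw [e1, hD, e2] at t
    exact t (peak_best him hne)
  -- step 4
  have hF : f (Function.update R j o) = m := by
    refine path_const f m (B (R i)) _ hE ?_
    intro W b hW hb hf
    by_cases hbi : b = i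
    · have : Function.update R j o b = W b := by subst hbi; rw [hb]; simp [B, hij]
      rw [this, Function.update_eq_self, hf]
    by_cases hbj : b = j
    · have : Function.update R j o b = W b := by subst hbj; rw [hb]; simp [B, hbi]
      rw [this, Function.update_eq_self, hf]
    have wi : W i = R i := by rcases hW i with h | h <;> simpa [B, hij] using h
    have wj : W j = o := by rcases hW j with h | h <;> simpa [B, hij.symm] using h
    have wb : (W b).1 = R0 := by rw [hb]; simp [B, hbi, hbj, indS_val]
    rw [Function.update_of_ne hbj]
    have hge : m ≤ f (Function.update W b (R b)) := by
      refine lower_eff hO hP _ m i ?_ ?_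
      · rw [Function.update_of_ne (Ne.symm hbi), wi]; exact hi
      · intro a
        by_cases hab : a = b
        · subst hab; simpa using hR a
        · rw [Function.update_of_ne hab]
          rcases hW a with h | h
          · rw [h]; exact hB _ him a
          · rw [h]
            by_cases haj : a = j
            · subst haj; right; exact ⟨oneA, hm1, by simpa using ho⟩
            · rw [Function.update_of_ne haj]; exact hR a
    by_contra hne
    have t := sp_two hP W b j (R b) wb
    rw [wj, hf] at t
    exact t (ho _ _ (Or.inr ⟨lt_of_le_of_ne hge (Ne.symm hne), (f _).2.2⟩))
  -- step 5
  have hge := lower_eff hO hP R m i hi hR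
  by_contra hne
  have t := sp_one hP (Function.update R j o) j (R j)
  rw [Function.update_idem, Function.update_eq_self, Function.update_self, hF] at t
  exact t (ho _ _ (Or.inr ⟨lt_of_le_of_ne hge (Ne.symm hne), (f _).2.2⟩))

end

lemma peak_spec (r : S0) (h : r.1 ≠ R0) : r.1.IsPeak (peak r.1) := by
  have hs : SinglePeaked r.1 := r.2.resolve_right h
  rw [peak, dif_pos hs]
  exact hs.choose_spec

/-- With x the value selected at a profile where agents
1,…,n−1 have peak 0 and agent n has peak 1, every profile R ≠ R^{0N} with
x < τ̲(R) gets outcome τ̲(R). -/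
theorem stmt_11 (n : ℕ) (hn : 3 ≤ n) (f : (Fin n → S0) → A)
    (hOnto : Onto f) (hPSP : PairwiseSP f)
    (Rbar : Fin n → S0)
    (h0 : ∀ i : Fin n, (i : ℕ) < n - 1 → (Rbar i).1.IsPeak zeroA)
    (h1 : (Rbar ⟨n - 1, by omega⟩).1.IsPeak oneA)
    (R : Fin n → S0) (hR : R ≠ indiffProfile n)
    (hx : (f Rbar : ℝ) < tmin R) :
    (f R : ℝ) = tmin R := by
  classical
  let X : Set ℝ := {x : ℝ | ∃ i : Fin n, (R i).1 ≠ R0 ∧ ((peak (R i).1 : ℝ) = x)}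
  have hfin : X.Finite := by
    refine (Set.finite_range (fun i : Fin n => (peak (R i).1 : ℝ))).subset ?_
    rintro y ⟨i, _, hy⟩
    exact ⟨i, hy⟩
  have hne : X.Nonempty := by
    by_contra hcon
    apply hR
    funext i
    apply Subtype.ext
    by_contra hi
    exact hcon ⟨_, i, hi, rfl⟩
  obtain ⟨i, hi, him⟩ : tmin R ∈ X := hne.csInf_mem hfin
  have hlow : ∀ a, (R a).1 ≠ R0 → tmin R ≤ peak (R a).1 := fun a ha =>
    csInf_le hfin.bddBelow ⟨a, ha, rfl⟩
  rw [← him] at hx hlow ⊢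
  congr 1
  let l : Fin n := ⟨n - 1, by omega⟩
  obtain ⟨j, k, hij, hik, hjk, hkl, hjl⟩ : ∃ j k : Fin n, i ≠ j ∧ i ≠ k ∧ j ≠ k ∧ k ≠ l ∧
      (i ≠ l → j = l) := by
    have a0 : (⟨0, by omega⟩ : Fin n) ≠ ⟨1, by omega⟩ := by simp [Fin.ext_iff]
    have b0 : (⟨0, by omega⟩ : Fin n) ≠ l := by simp only [l, ne_eq, Fin.ext_iff]; omega
    have b1 : (⟨1, by omega⟩ : Fin n) ≠ l := by simp only [l, ne_eq, Fin.ext_iff]; omega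
    by_cases hil : i = l
    · exact ⟨⟨0, by omega⟩, ⟨1, by omega⟩, hil ▸ b0.symm, hil ▸ b1.symm, a0, b1,
        fun h => absurd hil h⟩
    · by_cases hi0 : i = ⟨0, by omega⟩
      · exact ⟨l, ⟨1, by omega⟩, hil, hi0 ▸ a0, b1.symm, b1, fun _ => rfl⟩
      · exact ⟨l, ⟨0, by omega⟩, hil, hi0, b0.symm, b0, fun _ => rfl⟩
  have hk0 : (Rbar k).1.IsPeak zeroA := by
    apply h0
    have h2 := k.2
    have h3 : (k : ℕ) ≠ n - 1 := fun h => hkl (Fin.ext h)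
    omega
  have hl1 : (Rbar l).1.IsPeak oneA := h1
  have hW : f (Function.update Rbar j (Rbar l)) = f Rbar := by
    refine extremes_const hPSP Rbar _ k l hk0 hl1 ?_ ?_
    · rw [Function.update_of_ne hjk.symm]
    · by_cases h : j = l
      · subst h; simp
      · rw [Function.update_of_ne (Ne.symm h)]
  refine core hOnto hPSP i j k hij hik hjk (Rbar k) (Rbar l) hl1 (f Rbar) _ hx ?_ R hi
    (peak_spec _ hi) ?_
  · intro Q qk qj
    rw [← hW]
    refine extremes_const hPSP _ Q k j ?_ ?_ ?_ ?_
    · rwa [Function.update_of_ne hjk.symm]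
    · rwa [Function.update_self]
    · rw [Function.update_of_ne hjk.symm, qk]
    · rw [Function.update_self, qj]
  · intro a
    by_cases ha : (R a).1 = R0
    · exact Or.inl ha
    · exact Or.inr ⟨_, hlow a ha, peak_spec _ ha⟩
end

section
/- Let n ≥ 3 and let f : S₀ⁿ → A be onto and pairwise strategy-proof. Let R̄ ∈ S₀ⁿ be a profile in which every agent has a single-peaked preference, τ(R̄_i) = 0 for all i ∈ {1,…,n−1}, and τ(R̄_n) = 1, and set x = f(R̄). Then for every profile R ∈ S₀ⁿ with R ≠ R^{0N} and τ̄(R) < x, f(R) = τ̄(R). -/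
theorem pk_right {R : Pref} {p y z : A} (h : R.IsPeak p) (hr : R.rel y z) (hz : p ≤ z) : y ≤ z := by
  by_contra hc
  exact (h z y (Or.inl ⟨hz, not_le.mp hc⟩)).2 hr

theorem pk_left {R : Pref} {p y z : A} (h : R.IsPeak p) (hr : R.rel y z) (hz : z ≤ p) : z ≤ y := by
  by_contra hc
  exact (h z y (Or.inr ⟨not_le.mp hc, hz⟩)).2 hr

/-- Utility of the preference with peak `t` ranking everything above `t` over everything below. -/
noncomputable def rfu (t a : A) : ℝ := if t ≤ a then 2 - (a : ℝ) else (a : ℝ) - 1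

noncomputable def rfP (t : A) : Pref :=
  ⟨fun a b => rfu t b ≤ rfu t a, fun _ _ => le_total _ _, fun _ _ _ h1 h2 => le_trans h2 h1⟩

theorem rfP_peak (t : A) : (rfP t).IsPeak t := by
  intro a b h
  have hlt : rfu t b < rfu t a := by
    unfold rfu
    rcases h with ⟨h1, h2⟩ | ⟨h1, h2⟩
    · rw [if_pos h1, if_pos (h1.trans h2.le)]
      have : (a : ℝ) < b := h2
      linarith
    · rw [if_neg (not_le.mpr (lt_of_lt_of_le h1 h2))]
      have h3 : (b : ℝ) < a := h1
      have := a.2.2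
      split_ifs <;> linarith
  exact ⟨hlt.le, not_le.mpr hlt⟩

theorem rfP_ge {t y z : A} (h : (rfP t).rel y z) (hz : t ≤ z) : t ≤ y := by
  by_contra hc
  have h' : rfu t z ≤ rfu t y := h
  unfold rfu at h'
  rw [if_pos hz, if_neg hc] at h'
  have h1 : (y : ℝ) < t := not_le.mp hc
  have := z.2.2
  have := t.2.2
  linarith

noncomputable def rf (t : A) : S0 := ⟨rfP t, Or.inl ⟨t, rfP_peak t⟩⟩

theorem zero_le_A (a : A) : zeroA ≤ a := a.2.1
theorem le_one_A (a : A) : a ≤ oneA := a.2.2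

theorem zero_rel {R : Pref} (h : R.IsPeak zeroA) (a b : A) : R.rel a b ↔ a ≤ b := by
  constructor
  · intro hr
    exact pk_right h hr (zero_le_A b)
  · intro hab
    rcases hab.lt_or_eq with h1 | h1
    · exact (h a b (Or.inl ⟨zero_le_A a, h1⟩)).1
    · subst h1
      exact (R.total a a).elim id id

theorem zero_unique {R S : S0} (h : R.1.IsPeak zeroA) (h' : S.1.IsPeak zeroA) : R = S := by
  apply Subtype.ext
  have : R.1.rel = S.1.rel := by
    funext a b
    rw [zero_rel h, zero_rel h']
  cases hR : R.1
  cases hS : S.1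
  rw [hR, hS] at this
  simp only at this
  subst this
  rfl

section
variable {n : ℕ} {f : (Fin n → S0) → A}

theorem pairL (hP : PairwiseSP f) (i j : Fin n) (R R' : Fin n → S0)
    (ho : ∀ k, k ≠ i → k ≠ j → R' k = R k) (hi : (R i).1.rel (f R') (f R)) :
    (R j).1.rel (f R) (f R') := by
  by_contra hc
  refine hP {i, j} ⟨i, by simp⟩ Finset.card_le_two ⟨R, R', ?_, ?_, j, by simp, ?_, hc⟩
  · intro k hk
    simp only [Finset.mem_insert, Finset.mem_singleton, not_or] at hk
    exact ho k hk.1 hk.2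
  · intro k hk
    simp only [Finset.mem_insert, Finset.mem_singleton] at hk
    rcases hk with rfl | rfl
    · exact hi
    · exact ((R k).1.total _ _).resolve_left hc
  · exact ((R j).1.total _ _).resolve_left hc

theorem spL (hP : PairwiseSP f) (i : Fin n) (R R' : Fin n → S0)
    (ho : ∀ k, k ≠ i → R' k = R k) : (R i).1.rel (f R) (f R') := by
  rcases (R i).1.total (f R) (f R') with h | h
  · exact h
  · exact pairL hP i i R R' (fun k h1 _ => ho k h1) h

theorem unan (hO : Onto f) (hP : PairwiseSP f) (a : A) (R : Fin n → S0)
    (hall : ∀ i, (R i).1 = R0 ∨ (R i).1.IsPeak a) (j : Fin n) (hj : (R j).1.IsPeak a) :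
    f R = a := by
  classical
  obtain ⟨Rs, hRs⟩ := hO a
  have key : ∀ r : Pref, r.IsPeak a → ∀ y, r.rel y a → y = a := fun r hr y hy =>
    le_antisymm (pk_right hr hy le_rfl) (pk_left hr hy le_rfl)
  set T := Function.update Rs j (R j) with hT
  have hTj : T j = R j := by simp [hT]
  have hfT : f T = a := by
    apply key _ hj
    have := spL hP j T Rs (fun k hk => by simp [hT, hk])
    rwa [hTj, hRs] at this
  have main : ∀ s : Finset (Fin n), f (s.piecewise R T) = a := by
    intro s
    induction s using Finset.induction_on with
    | empty => simpa using hfT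
    | insert i s his ih =>
      rw [Finset.piecewise_insert]
      set U := s.piecewise R T with hU
      have hUj : U j = R j := by
        by_cases h : j ∈ s <;> simp [hU, h, hTj]
      have hU'j : (Function.update U i (R i)) j = R j := by
        by_cases h : j = i
        · subst h; simp
        · simp [h, hUj]
      rcases hall i with h | h
      · apply key _ hj
        have := pairL hP i j (Function.update U i (R i)) U
          (fun k hk _ => by simp [hk]) (by simp [h, R0])
        rwa [hU'j, ih] at this
      · apply key _ h
        have := spL hP i (Function.update U i (R i)) U (fun k hk => by simp [hk])
        rwa [Function.update_self, ih] at this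
  simpa using main Finset.univ

theorem eff (hO : Onto f) (hP : PairwiseSP f) (t : A) (R : Fin n → S0)
    (hall : ∀ i, (R i).1 = R0 ∨ ∃ p ≤ t, (R i).1.IsPeak p) (j : Fin n)
    (hj : (R j).1 ≠ R0) : f R ≤ t := by
  classical
  by_contra hc
  have hc : t < f R := not_le.mp hc
  let T : Fin n → S0 := fun i => if (R i).1 = R0 then R i else rf t
  have main : ∀ s : Finset (Fin n), t < f (s.piecewise T R) := by
    intro s
    induction s using Finset.induction_on with
    | empty => simpa using hc
    | insert i s his ih =>
      rw [Finset.piecewise_insert]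
      set U := s.piecewise T R with hU
      have hUi : U i = R i := by simp [hU, his]
      by_cases h0 : (R i).1 = R0
      · have : T i = U i := by simp [T, h0, hUi]
        rw [this, Function.update_eq_self]
        exact ih
      · obtain ⟨p, hpt, hp⟩ := (hall i).resolve_left h0
        have hTi : T i = rf t := by simp [T, h0]
        have h1 := spL hP i (Function.update U i (T i)) U (fun k hk => by simp [hk])
        rw [Function.update_self] at h1
        have h2 := spL hP i U (Function.update U i (T i)) (fun k hk => by simp [hk])
        rw [hUi] at h2
        have h3 : t ≤ f (Function.update U i (T i)) := by
          have h1' := h1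
          rw [hTi] at h1' ⊢
          exact rfP_ge h1' ih.le
        exact lt_of_lt_of_le ih (pk_right hp h2 (hpt.trans h3))
  have h := main Finset.univ
  rw [Finset.piecewise_univ] at h
  refine h.ne' (unan hO hP t T (fun i => ?_) j ?_)
  · by_cases h0 : (R i).1 = R0
    · left; simp [T, h0]
    · right; simp only [T, h0, if_false]; exact rfP_peak t
  · simp only [T, hj, if_false]; exact rfP_peak t

def I0 : S0 := ⟨R0, Or.inr rfl⟩

theorem I0_rel (a b : A) : I0.1.rel a b := trivial

theorem indep (hP : PairwiseSP f) (Z O : S0) (hZ : Z.1.IsPeak zeroA) (hO1 : O.1.IsPeak oneA)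
    (j l k : Fin n) (hjl : j ≠ l) (hkj : k ≠ j) (hkl : k ≠ l) :
    f (Function.update (fun _ => Z) j O) = f (Function.update (fun _ => Z) l O) := by
  have main : ∀ j l : Fin n, j ≠ l → k ≠ j → k ≠ l →
      f (Function.update (fun _ => Z) l O) =
        f (Function.update (Function.update (fun _ => Z) l O) j O) := by
    intro j l hjl hkj hkl
    set W : Fin n → S0 := Function.update (fun _ => Z) l O with hW
    have hw : ∀ r : S0, f (Function.update W j r) =
        f (Function.update W j I0) := by
      intro r
      set V := Function.update W j I0 with hV
      have e1 := pairL hP j l V (Function.update W j r) (fun m hm _ => by simp [hV, hm])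
        (by rw [hV, Function.update_self]; exact I0_rel _ _)
      have e2 := pairL hP j k V (Function.update W j r) (fun m hm _ => by simp [hV, hm])
        (by rw [hV, Function.update_self]; exact I0_rel _ _)
      have hl : V l = O := by simp [hV, hW, hjl.symm]
      have hk : V k = Z := by simp [hV, hW, hkj, hkl]
      rw [hl] at e1
      rw [hk] at e2
      exact le_antisymm (pk_left hO1 e1 (le_one_A _)) (pk_right hZ e2 (zero_le_A _))
    have a1 := hw Z
    have a2 := hw O
    have : Function.update W j Z = W := by
      have hz : Z = W j := by simp [hW, hjl]
      rw [hz, Function.update_eq_self]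
    rw [this] at a1
    rw [a1, a2]
  rw [main j l hjl hkj hkl, main l j hjl.symm hkl hkj, Function.update_comm hjl]

end

theorem peak_spec_s12 (R : S0) (h : R.1 ≠ R0) : R.1.IsPeak (peak R.1) := by
  have hs : SinglePeaked R.1 := R.2.resolve_right h
  unfold peak
  rw [dif_pos hs]
  exact hs.choose_spec

/-- With x the value selected at a profile where agents
1,…,n−1 have peak 0 and agent n has peak 1, every profile R ≠ R^{0N} with
τ̄(R) < x gets outcome τ̄(R). -/
theorem stmt_12 (n : ℕ) (hn : 3 ≤ n) (f : (Fin n → S0) → A)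
    (hOnto : Onto f) (hPSP : PairwiseSP f)
    (Rbar : Fin n → S0)
    (h0 : ∀ i : Fin n, (i : ℕ) < n - 1 → (Rbar i).1.IsPeak zeroA)
    (h1 : (Rbar ⟨n - 1, by omega⟩).1.IsPeak oneA)
    (R : Fin n → S0) (hR : R ≠ indiffProfile n)
    (hx : tmax R < (f Rbar : ℝ)) :
    (f R : ℝ) = tmax R := by
  classical
  have hfin : {x : ℝ | ∃ i : Fin n, (R i).1 ≠ R0 ∧ ((peak (R i).1 : ℝ) = x)}.Finite := by
    refine (Set.finite_range (fun i => (peak (R i).1 : ℝ))).subset ?_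
    rintro x ⟨i, _, rfl⟩
    exact ⟨i, rfl⟩
  have hne : {x : ℝ | ∃ i : Fin n, (R i).1 ≠ R0 ∧ ((peak (R i).1 : ℝ) = x)}.Nonempty := by
    by_contra hc
    apply hR
    funext i
    apply Subtype.ext
    by_contra hi
    exact hc ⟨_, i, hi, rfl⟩
  obtain ⟨j, hj, hjt⟩ := hne.csSup_mem hfin
  have hjt : (peak (R j).1 : ℝ) = tmax R := hjt
  have hle : ∀ i, (R i).1 ≠ R0 → peak (R i).1 ≤ peak (R j).1 := by
    intro i hi
    have h : (peak (R i).1 : ℝ) ≤ tmax R := le_csSup hfin.bddAbove ⟨i, hi, rfl⟩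
    rw [← hjt] at h
    exact h
  rw [← hjt] at hx ⊢
  have hpj := peak_spec_s12 (R j) hj
  generalize peak (R j).1 = t at *
  have hx : t < f Rbar := hx
  suffices f R = t by rw [this]
  refine le_antisymm (eff hOnto hPSP t R (fun i => ?_) j hj) ?_
  · by_cases h : (R i).1 = R0
    · exact Or.inl h
    · exact Or.inr ⟨_, hle i h, peak_spec_s12 _ h⟩
  by_contra hc
  have hc : f R < t := not_le.mp hc
  let l : Fin n := ⟨n - 1, by omega⟩
  let Z := Rbar ⟨0, by omega⟩
  let O := Rbar l
  have hZ : Z.1.IsPeak zeroA := h0 _ (by simp; omega)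
  have hO1 : O.1.IsPeak oneA := h1
  have hRb : Rbar = Function.update (fun _ => Z) l O := by
    funext i
    by_cases hi : i = l
    · subst hi; simp [O]
    · rw [Function.update_of_ne hi]
      apply zero_unique (h0 i ?_) hZ
      have : (i : ℕ) ≠ n - 1 := fun h => hi (Fin.ext h)
      have := i.2
      omega
  have hxj : t < f (Function.update (fun _ => Z) j O) := by
    by_cases hjl : j = l
    · rw [hjl, ← hRb]; exact hx
    · obtain ⟨k, hk⟩ : ∃ k, k ∉ ({j, l} : Finset (Fin n)) := by
        by_contra hcon
        push Not at hcon
        have h3 : (Finset.univ : Finset (Fin n)).card ≤ ({j, l} : Finset (Fin n)).card :=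
          Finset.card_le_card (fun k _ => hcon k)
        have h4 : ({j, l} : Finset (Fin n)).card ≤ 2 := Finset.card_le_two
        rw [Finset.card_univ, Fintype.card_fin] at h3
        omega
      simp only [Finset.mem_insert, Finset.mem_singleton, not_or] at hk
      rw [indep hPSP Z O hZ hO1 j l k hjl hk.1 hk.2, ← hRb]
      exact hx
  let B : Fin n → S0 := Function.update (fun _ => Z) j (R j)
  have main : ∀ s : Finset (Fin n), f (s.piecewise B R) < t := by
    intro s
    induction s using Finset.induction_on with
    | empty => simpa using hc
    | insert i s his ih =>
      rw [Finset.piecewise_insert]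
      set U := s.piecewise B R with hU
      have hUi : U i = R i := by simp [hU, his]
      by_cases hij : i = j
      · have : B i = U i := by rw [hUi, hij]; simp [B]
        rw [this, Function.update_eq_self]
        exact ih
      · have hBi : B i = Z := by simp [B, hij]
        have e := spL hPSP i (Function.update U i (B i)) U (fun k hk => by simp [hk])
        rw [Function.update_self, hBi] at e
        rw [hBi]
        exact lt_of_le_of_lt (pk_right hZ e (zero_le_A _)) ih
  have hB := main Finset.univ
  rw [Finset.piecewise_univ] at hB
  let C : Fin n → S0 := Function.update (fun _ => Z) j (rf t)
  have hCj : C j = rf t := by simp [C]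
  have c1 : t ≤ f C := by
    have e := spL hPSP j C (Function.update (fun _ => Z) j O) (fun k hk => by simp [C, hk])
    rw [hCj] at e
    exact rfP_ge e hxj.le
  have e := spL hPSP j B C (fun k hk => by simp [B, C, hk])
  have hBj : B j = R j := by simp [B]
  have c2 : f C ≤ t := by
    apply eff hOnto hPSP t C (fun i => ?_) j
    · rw [hCj]
      intro h
      have e1 := rfP_peak t
      have h' : rfP t = R0 := h
      rw [h'] at e1
      exact (e1 t (f B) (Or.inr ⟨hB, le_rfl⟩)).2 trivial
    · right
      by_cases hij : i = j
      · exact ⟨t, le_rfl, by rw [hij, hCj]; exact rfP_peak t⟩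
      · exact ⟨zeroA, zero_le_A t, by simpa [C, hij] using hZ⟩
  rw [hBj, le_antisymm c2 c1] at e
  exact absurd (pk_left hpj e le_rfl) (not_le.mpr hB)
end

section
/- Let n ≥ 2. There exists a social choice function f : S₀ⁿ → A that is onto and weakly group strategy-proof but is neither efficient nor tops-only. (In particular, the rule f* defined by f*(R) = τ(R_1) if R_1 ≠ R⁰, f*(R) = 0 if R_1 = R⁰ and 0 P_2 1, and f*(R) = 1 otherwise, has these properties.) -/
theorem IsPeak_unique {R : Pref} {p q : A} (hp : R.IsPeak p) (hq : R.IsPeak q) : p = q := by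
  rcases lt_trichotomy p q with h | h | h
  · exact absurd (hp p q (Or.inl ⟨le_refl _, h⟩)).1 (hq q p (Or.inr ⟨h, le_refl _⟩)).2
  · exact h
  · exact absurd (hq q p (Or.inl ⟨le_refl _, h⟩)).1 (hp p q (Or.inr ⟨h, le_refl _⟩)).2

theorem peak_isPeak {R : Pref} (h : SinglePeaked R) : R.IsPeak (peak R) := by
  unfold peak
  rw [dif_pos h]
  exact h.choose_spec

theorem peak_eq {R : Pref} {p : A} (h : R.IsPeak p) : peak R = p :=
  IsPeak_unique (peak_isPeak ⟨p, h⟩) h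

/-- Preference with utility `min (x - p) (k * (p - x))`. -/
noncomputable def tent (p : A) (k : ℝ) : Pref where
  rel a b := min ((b : ℝ) - p) (k * (p - b)) ≤ min ((a : ℝ) - p) (k * (p - a))
  total a b := le_total _ _
  trans a b c h1 h2 := le_trans h2 h1

theorem tent_P (p : A) (k : ℝ) (a b : A) : (tent p k).P a b ↔
    min ((b : ℝ) - p) (k * (p - b)) < min ((a : ℝ) - p) (k * (p - a)) := by
  unfold Pref.P tent
  simp only [not_le]
  exact ⟨fun h => h.2, fun h => ⟨h.le, h⟩⟩

theorem tent_isPeak (p : A) (k : ℝ) (hk : 0 < k) : (tent p k).IsPeak p := by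
  rintro a b (⟨h1, h2⟩ | ⟨h1, h2⟩)
  · rw [tent_P]
    have h1 : (p : ℝ) ≤ a := h1
    have h2 : (a : ℝ) < b := h2
    apply lt_min
    · exact min_lt_of_right_lt (by nlinarith)
    · exact min_lt_of_right_lt (by nlinarith)
  · rw [tent_P]
    have h1 : (b : ℝ) < a := h1
    have h2 : (a : ℝ) ≤ p := h2
    apply lt_min
    · exact min_lt_of_left_lt (by nlinarith)
    · exact min_lt_of_left_lt (by nlinarith)

theorem zero_ne_one_A : zeroA ≠ oneA := by
  intro h
  have : (0 : ℝ) = 1 := congrArg Subtype.val h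
  norm_num at this

theorem not_singlePeaked_R0 : ¬ SinglePeaked R0 := by
  rintro ⟨p, hp⟩
  rcases le_total p zeroA with h | h
  · refine (hp zeroA oneA (Or.inl ⟨h, ?_⟩)).2 trivial
    change (0 : ℝ) < 1
    norm_num
  · rcases h.eq_or_lt with h | h
    · refine (hp zeroA oneA (Or.inl ⟨h.ge, ?_⟩)).2 trivial
      change (0 : ℝ) < 1
      norm_num
    · exact (hp p zeroA (Or.inr ⟨h, le_refl _⟩)).2 trivial

noncomputable def tentS (p : A) (k : ℝ) (hk : 0 < k) : S0 :=
  ⟨tent p k, Or.inl ⟨p, tent_isPeak p k hk⟩⟩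

theorem tent_ne (p : A) (k : ℝ) (hk : 0 < k) : tent p k ≠ R0 := fun h =>
  not_singlePeaked_R0 (h ▸ ⟨p, tent_isPeak p k hk⟩)

def zeroS : S0 := ⟨R0, Or.inr rfl⟩

noncomputable def halfA : A := ⟨1/2, by constructor <;> norm_num⟩

open Classical in
/-- The rule f*, with the first two agents called `i` and `j`. -/
noncomputable def fstar {n : ℕ} (i j : Fin n) (R : Fin n → S0) : A :=
  if (R i).1 = R0 then (if (R j).1.P zeroA oneA then zeroA else oneA) else peak (R i).1

theorem P_irrefl (R : Pref) (a : A) : ¬ R.P a a := fun h => h.2 h.1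

theorem fstar_wgsp {n : ℕ} (i j : Fin n) : WeakGroupSP (fstar i j) := by
  rintro S ⟨s, hs⟩ ⟨R, R', hout, hin⟩
  have key : fstar i j R' ≠ fstar i j R := fun h => by
    have := hin s hs
    rw [h] at this
    exact P_irrefl _ _ this
  by_cases h0 : (R i).1 = R0
  · have hi : i ∉ S := fun hi => by
      have := hin i hi
      rw [h0] at this
      exact this.2 trivial
    have e := hout i hi
    by_cases hj : j ∈ S
    · have hP := hin j hj
      unfold fstar at hP key
      rw [e] at hP key
      simp only [h0, if_true] at hP key
      by_cases c : (R j).1.P zeroA oneA <;> by_cases c' : (R' j).1.P zeroA oneA <;>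
        simp only [c, c', if_true, if_false] at hP key
      · exact key rfl
      · exact c.2 hP.1
      · exact key rfl
    · apply key
      unfold fstar
      rw [e, hout j hj]
  · have hsp : SinglePeaked (R i).1 := (R i).2.resolve_right h0
    have hf : fstar i j R = peak (R i).1 := by unfold fstar; rw [if_neg h0]
    by_cases hi : i ∈ S
    · have hP := hin i hi
      rw [hf] at hP key
      have hp := peak_isPeak hsp
      rcases lt_or_gt_of_ne key with h | h
      · exact (hp _ _ (Or.inr ⟨h, le_refl _⟩)).2 hP.1
      · exact (hp _ _ (Or.inl ⟨le_refl _, h⟩)).2 hP.1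
    · apply key
      unfold fstar
      rw [hout i hi]
      simp [h0]

/-- Profile: agent `i` indifferent, all others `r`. -/
def prof {n : ℕ} (i : Fin n) (r : S0) : Fin n → S0 := fun m => if m = i then zeroS else r

theorem not_P_one : ¬ (tent halfA 1).P zeroA oneA := by
  rw [tent_P]
  norm_num [halfA, zeroA, oneA]

theorem P_two : (tent halfA 2).P zeroA oneA := by
  rw [tent_P]
  norm_num [halfA, zeroA, oneA]

theorem half_P_one : (tent halfA 1).P halfA oneA := by
  rw [tent_P]
  norm_num [halfA, oneA]

theorem fstar_one {n : ℕ} (i j : Fin n) (h : j ≠ i) :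
    fstar i j (prof i (tentS halfA 1 one_pos)) = oneA := by
  simp [fstar, prof, h, zeroS, tentS, not_P_one]

theorem fstar_two {n : ℕ} (i j : Fin n) (h : j ≠ i) :
    fstar i j (prof i (tentS halfA 2 two_pos)) = zeroA := by
  simp [fstar, prof, h, zeroS, tentS, P_two]

/-- For n ≥ 2, there exists an SCF that is onto and weakly group
strategy-proof but neither efficient nor tops-only. -/
theorem stmt_13 (n : ℕ) (hn : 2 ≤ n) :
    ∃ f : (Fin n → S0) → A,
      Onto f ∧ WeakGroupSP f ∧ ¬ Efficient f ∧ ¬ TopsOnly f := by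
  let i : Fin n := ⟨0, by omega⟩
  let j : Fin n := ⟨1, by omega⟩
  have hij : j ≠ i := by simp [i, j]
  refine ⟨fstar i j, ?_, fstar_wgsp i j, ?_, ?_⟩
  · intro a
    refine ⟨fun _ => tentS a 1 one_pos, ?_⟩
    unfold fstar tentS
    rw [if_neg (tent_ne a 1 one_pos)]
    exact peak_eq (tent_isPeak a 1 one_pos)
  · intro h
    apply h (prof i (tentS halfA 1 one_pos))
    rw [fstar_one i j hij]
    refine ⟨halfA, ?_, ?_, j, ?_⟩
    · intro h
      have : (1/2 : ℝ) = 1 := congrArg Subtype.val h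
      norm_num at this
    · intro m
      by_cases hm : m = i
      · simp [prof, hm, zeroS, R0]
      · simpa [prof, hm, tentS] using half_P_one.1
    · simpa [prof, hij, tentS] using half_P_one
  · intro h
    have := h (prof i (tentS halfA 1 one_pos)) (prof i (tentS halfA 2 two_pos)) ?_ ?_
    · rw [fstar_one i j hij, fstar_two i j hij] at this
      exact zero_ne_one_A this.symm
    · intro m
      by_cases hm : m = i
      · simp [prof, hm]
      · simp [prof, hm, tentS, tent_ne]
    · intro m _
      by_cases hm : m = i
      · simp [prof, hm]
      · simp only [prof, hm, if_false]
        exact (peak_eq (tent_isPeak halfA 1 one_pos)).trans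
          (peak_eq (tent_isPeak halfA 2 two_pos)).symm
end

section
/- Let n ≥ 2 and let f : S₀ⁿ → A be onto and strategy-proof. Then f satisfies unanimity on single-peaked profiles: for every profile R ∈ S₀ⁿ in which every agent has a single-peaked preference with a common peak a ∈ A (τ(R_i) = a for all i ∈ N), f(R) = a. -/
/-- For n ≥ 2, every onto and strategy-proof SCF satisfies
unanimity on single-peaked profiles with a common peak. -/
theorem stmt_15 (n : ℕ) (hn : 2 ≤ n) (f : (Fin n → S0) → A)
    (hOnto : Onto f) (hSP : StrategyProof f)
    (R : Fin n → S0) (a : A) (hpeak : ∀ i : Fin n, (R i).1.IsPeak a) :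
    f R = a := by
  classical
  obtain ⟨Q, hQ⟩ := hOnto a
  have key : ∀ s : Finset (Fin n), f (s.piecewise R Q) = a := by
    intro s
    induction s using Finset.induction_on with
    | empty => simpa using hQ
    | insert j s hj ih =>
      have h := hSP ((insert j s).piecewise R Q) j (Q j)
      have e1 : Function.update ((insert j s).piecewise R Q) j (Q j) = s.piecewise R Q := by
        rw [Finset.piecewise_insert, Function.update_idem]
        have : Q j = s.piecewise R Q j := by simp [hj]
        rw [this, Function.update_eq_self]
      have e2 : (insert j s).piecewise R Q j = R j := by simp
      rw [e1, ih, e2] at h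
      rcases lt_trichotomy (f ((insert j s).piecewise R Q)) a with hlt | heq | hgt
      · exact absurd h (hpeak j _ _ (Or.inr ⟨hlt, le_rfl⟩)).2
      · exact heq
      · exact absurd h (hpeak j _ _ (Or.inl ⟨le_rfl, hgt⟩)).2
  simpa using key Finset.univ
end

section
/- Let n ≥ 2. Every target rule with a default f : S₀ⁿ → A is efficient. -/
/-- For n ≥ 2, every target rule with a default is efficient. -/
theorem stmt_17 (n : ℕ) (hn : 2 ≤ n) (f : (Fin n → S0) → A)
    (hT : IsTargetRule f) : Efficient f := by
  obtain ⟨x, y, -, hx⟩ := hT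
  intro R
  rintro ⟨b, hba, hall, j, hj⟩
  have hjR : (R j).1 ≠ R0 := by
    intro h
    apply hj.2
    rw [h]
    trivial
  have hne : R ≠ indiffProfile n := by
    intro h
    apply hjR
    rw [h]
    rfl
  have hpk : ∀ i, (R i).1 ≠ R0 → (R i).1.IsPeak (peak (R i).1) := by
    intro i hi
    have hs : SinglePeaked (R i).1 := (R i).2.resolve_right hi
    unfold peak
    rw [dif_pos hs]
    exact hs.choose_spec
  have hfin : {x : ℝ | ∃ i : Fin n, (R i).1 ≠ R0 ∧ ((peak (R i).1 : ℝ) = x)}.Finite := by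
    apply (Set.finite_range (fun i : Fin n => (peak (R i).1 : ℝ))).subset
    rintro z ⟨i, -, h⟩
    exact ⟨i, h⟩
  have hnon : {x : ℝ | ∃ i : Fin n, (R i).1 ≠ R0 ∧ ((peak (R i).1 : ℝ) = x)}.Nonempty :=
    ⟨_, j, hjR, rfl⟩
  obtain ⟨i₁, h₁, e₁⟩ := hnon.csInf_mem hfin
  obtain ⟨i₂, h₂, e₂⟩ := hnon.csSup_mem hfin
  have hle : tmin R ≤ tmax R := csInf_le_csSup hnon hfin.bddBelow hfin.bddAbove
  change _ = tmin R at e₁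
  change _ = tmax R at e₂
  obtain ⟨c₁, c₂, c₃⟩ := hx R hne
  have hb : tmin R ≤ (f R : ℝ) ∧ (f R : ℝ) ≤ tmax R := by
    rcases lt_or_ge (x : ℝ) (tmin R) with h | h
    · rw [c₂ h]; exact ⟨le_rfl, hle⟩
    · rcases lt_or_ge (tmax R) (x : ℝ) with h' | h'
      · rw [c₃ h']; exact ⟨hle, le_rfl⟩
      · rw [c₁ ⟨h, h'⟩]; exact ⟨h, h'⟩
  rcases lt_or_gt_of_ne hba with h | h
  · refine (hpk i₂ h₂ (f R) b (Or.inr ⟨h, ?_⟩)).2 (hall i₂)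
    rw [← Subtype.coe_le_coe, e₂]
    exact hb.2
  · refine (hpk i₁ h₁ (f R) b (Or.inl ⟨?_, h⟩)).2 (hall i₁)
    rw [← Subtype.coe_le_coe, e₁]
    exact hb.1
end
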